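/- arXiv:cs/9907001 — 2 statements merged into one kernel-verified Lean document; each statement's English description precedes it below -/
import Mathlib

section
/- A spanning tree T of a connected weighted graph G is the unique minimum spanning tree if and only if for every swap (e,f) — i.e., every pair with e an edge of T, f an edge of G not in T, and e lying on the cycle induced in T by f — the weight of f is strictly greater than the weight of e. -/
open SimpleGraph

/-- `T` is a spanning tree of `G`: a subgraph of `G` (on the same vertex set)
that is connected and acyclic. -/
def IsSpanningTree {V : Type*} (G T : SimpleGraph V) : Prop :=
  T ≤ G ∧ T.IsTree

open scoped Classical in
/-- Total weight of (the edges of) a graph. -/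
noncomputable def treeWeight {V : Type*} [Fintype V] (T : SimpleGraph V)
    (w : Sym2 V → ℝ) : ℝ :=
  ∑ e ∈ T.edgeFinset, w e

/-- `(e, f)` is a swap for the spanning tree `T` of `G`:
`e ∈ T`, `f ∈ G \ T`, and `(T ∪ {f}) \ {e}` is again a spanning tree of `G`. -/
def IsSwap {V : Type*} (G T : SimpleGraph V) (e f : Sym2 V) : Prop :=
  e ∈ T.edgeSet ∧ f ∈ G.edgeSet ∧ f ∉ T.edgeSet ∧
    IsSpanningTree G (SimpleGraph.fromEdgeSet ((insert f T.edgeSet) \ {e}))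

/-!
Symmetric exchange for spanning trees: if `f` is an edge of `T'` but not of `T`, then removing `f`
disconnects `T'`, and the `T`-path between the ends of `f` must cross that cut along some edge `e`.
Both `T - e + f` and `T' - f + e` are then spanning trees. If every swap for `T` increases the
weight, the second of these trees is strictly lighter than `T'`, and it has fewer edges outside `T`;
repeating this descends from `T'` to `T`.
-/

section Exchange

variable {V : Type*} {G T T' : SimpleGraph V} {e f : Sym2 V} {x y : V}

lemma connected_deleteEdges_sup_edge (hG : G.Connected) (hne : s(x, y) ≠ e)
    (hxy : ¬ (G.deleteEdges {e}).Reachable x y) :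
    ((G ⊔ edge x y).deleteEdges {e}).Connected := by
  have hxy_ne : x ≠ y := by rintro rfl; exact hxy (Reachable.refl x)
  have hnot_adj : ¬ G.Adj x y := fun h ↦ hxy (deleteEdges_adj.2 ⟨h, hne⟩).reachable
  have hadj : (G ⊔ edge x y).Adj x y := Or.inr ((edge_adj ..).2 ⟨Or.inl ⟨rfl, rfl⟩, hxy_ne⟩)
  obtain ⟨p, hp⟩ := hG.exists_isPath y x
  have he : e ∈ p.edges :=
    p.mem_edges_of_not_reachable_deleteEdges fun h ↦ hxy h.symm
  have hcycle : (Walk.cons hadj (p.mapLe le_sup_left)).IsCycle := by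
    refine (Walk.cons_isCycle_iff _ _).2 ⟨hp.mapLe _, fun h ↦ hnot_adj ?_⟩
    rw [Walk.edges_mapLe_eq_edges] at h
    exact p.adj_of_mem_edges h
  have hnot_bridge : ¬ (G ⊔ edge x y).IsBridge e := fun h ↦
    h.notMem_edges_of_isCycle hcycle (by simp [he])
  induction e with
  | h a b => exact (hG.mono le_sup_left).connected_delete_edge_of_not_isBridge hnot_bridge

lemma not_reachable_deleteEdges_of_isPath (hG : G.IsAcyclic) {p : G.Walk x y} (hp : p.IsPath)
    (he : e ∈ p.edges) : ¬ (G.deleteEdges {e}).Reachable x y := by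
  intro h
  obtain ⟨q, hq⟩ := h.exists_isPath
  have hpq : p = q.mapLe (deleteEdges_le {e}) :=
    congrArg Subtype.val ((hG.subsingleton_path x y).elim ⟨p, hp⟩ ⟨_, hq.mapLe _⟩)
  rw [hpq, Walk.edges_mapLe_eq_edges] at he
  have he_mem := q.edges_subset_edgeSet he
  rw [edgeSet_deleteEdges] at he_mem
  exact he_mem.2 rfl

/-- The edge exchange `T - e + f`, in the form in which `IsSwap` mentions it: if `f = e`, then the
edge is removed. -/
def edgeSwap (T : SimpleGraph V) (e f : Sym2 V) : SimpleGraph V :=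
  fromEdgeSet (insert f T.edgeSet \ {e})

lemma edgeSet_edgeSwap (hf : ¬ f.IsDiag) :
    (edgeSwap T e f).edgeSet = insert f T.edgeSet \ {e} := by
  rw [edgeSwap, edgeSet_fromEdgeSet, sdiff_eq_left, Set.disjoint_left]
  rintro z ⟨rfl | hz, -⟩
  · exact hf
  · exact T.not_isDiag_of_mem_edgeSet hz

lemma edgeSwap_ne_self (he : e ∈ T.edgeSet) : edgeSwap T e f ≠ T := by
  intro h
  rw [← h, edgeSwap, edgeSet_fromEdgeSet] at he
  exact he.1.2 rfl

lemma edgeSwap_le (hT : T ≤ G) (hf : f ∈ G.edgeSet) : edgeSwap T e f ≤ G :=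
  (fromEdgeSet_le G).2 fun _ hz ↦
    Set.insert_subset hf (edgeSet_subset_edgeSet.2 hT) hz.1.1

lemma edgeSwap_mk : edgeSwap T e s(x, y) = (T ⊔ edge x y).deleteEdges {e} := by
  rw [edgeSwap, deleteEdges, fromEdgeSet_sdiff, Set.insert_eq, fromEdgeSet_union,
    fromEdgeSet_edgeSet, sup_comm, edge]

lemma isTree_edgeSwap (hT : T.IsTree) (hne : s(x, y) ≠ e)
    (hxy : ¬ (T.deleteEdges {e}).Reachable x y) : (edgeSwap T e s(x, y)).IsTree := by
  rw [edgeSwap_mk]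
  refine ⟨connected_deleteEdges_sup_edge hT.connected hne hxy, ?_⟩
  refine ((hT.isAcyclic.anti (deleteEdges_le {e})).sup_edge_of_not_reachable hxy).anti ?_
  rw [deleteEdges_sup]
  exact sup_le_sup_left (deleteEdges_le _) _

lemma exists_isTree_edgeSwap_edgeSwap (hT : T.IsTree) (hT' : T'.IsTree)
    (hfT' : f ∈ T'.edgeSet) (hfT : f ∉ T.edgeSet) :
    ∃ e ∈ T.edgeSet, e ∉ T'.edgeSet ∧
      (edgeSwap T e f).IsTree ∧ (edgeSwap T' f e).IsTree := by
  induction f with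
  | h x y =>
  have hbridge : ¬ (T'.deleteEdges {s(x, y)}).Reachable x y :=
    isBridge_iff.1 (isAcyclic_iff_forall_isBridge.1 hT'.isAcyclic hfT')
  obtain ⟨p, hp⟩ := hT.connected.exists_isPath x y
  obtain ⟨⟨⟨a, b⟩, hab⟩, hd, ha, hb⟩ := p.exists_boundary_dart
    {v | (T'.deleteEdges {s(x, y)}).Reachable x v} (Reachable.refl x) hbridge
  have hcut : ¬ (T'.deleteEdges {s(x, y)}).Reachable a b := fun h ↦ hb (ha.trans h)
  have hmem : s(a, b) ∈ p.edges := List.mem_map.2 ⟨_, hd, rfl⟩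
  have hne : s(a, b) ≠ s(x, y) := fun h ↦ hfT (h ▸ hab)
  exact ⟨s(a, b), hab, fun h ↦ hcut (deleteEdges_adj.2 ⟨h, hne⟩).reachable,
    isTree_edgeSwap hT hne.symm (not_reachable_deleteEdges_of_isPath hT.isAcyclic hp hmem),
    isTree_edgeSwap hT' hne hcut⟩

lemma exists_isSwap_isSwap (hT : IsSpanningTree G T) (hT' : IsSpanningTree G T') (hne : T' ≠ T) :
    ∃ e f, IsSwap G T e f ∧ IsSwap G T' f e := by
  have hnot_le : ¬ T' ≤ T := fun hle ↦
    hne ((isTree_iff_minimal_connected.1 hT.2).eq_of_le hT'.2.connected hle)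
  obtain ⟨f, hfT', hfT⟩ := Set.not_subset.1 (mt edgeSet_subset_edgeSet.1 hnot_le)
  obtain ⟨e, heT, heT', htree, htree'⟩ := exists_isTree_edgeSwap_edgeSwap hT.2 hT'.2 hfT' hfT
  have heG : e ∈ G.edgeSet := edgeSet_subset_edgeSet.2 hT.1 heT
  have hfG : f ∈ G.edgeSet := edgeSet_subset_edgeSet.2 hT'.1 hfT'
  exact ⟨e, f, ⟨heT, hfG, hfT, edgeSwap_le hT.1 hfG, htree⟩,
    ⟨hfT', heG, heT', edgeSwap_le hT'.1 heG, htree'⟩⟩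

lemma edgeSet_edgeSwap_sdiff_ssubset (he : e ∈ T.edgeSet) (hfT' : f ∈ T'.edgeSet)
    (hfT : f ∉ T.edgeSet) :
    (edgeSwap T' f e).edgeSet \ T.edgeSet ⊂ T'.edgeSet \ T.edgeSet := by
  rw [edgeSet_edgeSwap (T.not_isDiag_of_mem_edgeSet he)]
  refine ⟨?_, fun h ↦ (h ⟨hfT', hfT⟩).1.2 rfl⟩
  rintro z ⟨⟨rfl | hzT', -⟩, hzT⟩
  · exact absurd he hzT
  · exact ⟨hzT', hzT⟩

end Exchange

section Weight

variable {V M : Type*} {G T : SimpleGraph V} {e f : Sym2 V}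

lemma add_sum_edgeFinset_edgeSwap [AddCommMonoid M] (w : Sym2 V → M) [Fintype T.edgeSet]
    [Fintype (edgeSwap T e f).edgeSet] (he : e ∈ T.edgeSet) (hf : f ∉ T.edgeSet)
    (hf_diag : ¬ f.IsDiag) :
    w e + ∑ z ∈ (edgeSwap T e f).edgeFinset, w z = w f + ∑ z ∈ T.edgeFinset, w z := by
  classical
  have hne : f ≠ e := fun h ↦ hf (h ▸ he)
  have hswap : (edgeSwap T e f).edgeFinset = insert f (T.edgeFinset.erase e) := by
    rw [← Finset.coe_inj, coe_edgeFinset, edgeSet_edgeSwap hf_diag, Finset.coe_insert,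
      Finset.coe_erase, coe_edgeFinset, Set.insert_sdiff_singleton_comm hne]
  rw [hswap, Finset.sum_insert (by simp [hf]), add_left_comm,
    Finset.add_sum_erase _ _ (mem_edgeFinset.2 he)]

variable [AddCommMonoid M] [PartialOrder M] [IsOrderedCancelAddMonoid M] {w : Sym2 V → M}

lemma IsSwap.sum_lt_sum_edgeSwap_iff (h : IsSwap G T e f) [Fintype T.edgeSet]
    [Fintype (edgeSwap T e f).edgeSet] :
    ∑ z ∈ T.edgeFinset, w z < ∑ z ∈ (edgeSwap T e f).edgeFinset, w z ↔ w e < w f := by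
  obtain ⟨he, hfG, hfT, -⟩ := h
  rw [← add_lt_add_iff_left (w e),
    add_sum_edgeFinset_edgeSwap w he hfT (G.not_isDiag_of_mem_edgeSet hfG), add_lt_add_iff_right]

lemma IsSwap.sum_edgeSwap_lt_sum_iff (h : IsSwap G T e f) [Fintype T.edgeSet]
    [Fintype (edgeSwap T e f).edgeSet] :
    ∑ z ∈ (edgeSwap T e f).edgeFinset, w z < ∑ z ∈ T.edgeFinset, w z ↔ w f < w e := by
  obtain ⟨he, hfG, hfT, -⟩ := h
  rw [← add_lt_add_iff_left (w e),
    add_sum_edgeFinset_edgeSwap w he hfT (G.not_isDiag_of_mem_edgeSet hfG), add_lt_add_iff_right]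

open scoped Classical in
lemma sum_lt_sum_of_forall_isSwap [Fintype V] (hT : IsSpanningTree G T)
    (hswap : ∀ e f, IsSwap G T e f → w e < w f) {T' : SimpleGraph V}
    (hT' : IsSpanningTree G T') (hne : T' ≠ T) :
    ∑ z ∈ T.edgeFinset, w z < ∑ z ∈ T'.edgeFinset, w z := by
  induction hn : (T'.edgeSet \ T.edgeSet).ncard using Nat.strong_induction_on generalizing T' with
  | _ n ih =>
  obtain ⟨e, f, hef, hfe⟩ := exists_isSwap_isSwap hT hT' hne
  have hlighter : ∑ z ∈ (edgeSwap T' f e).edgeFinset, w z < ∑ z ∈ T'.edgeFinset, w z :=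
    hfe.sum_edgeSwap_lt_sum_iff.2 (hswap e f hef)
  have hcloser : ((edgeSwap T' f e).edgeSet \ T.edgeSet).ncard < n :=
    hn ▸ Set.ncard_lt_ncard (edgeSet_edgeSwap_sdiff_ssubset hef.1 hfe.1 hef.2.2.1)
  rcases eq_or_ne (edgeSwap T' f e) T with rfl | hne_swap
  · exact hlighter
  · exact (ih _ hcloser hfe.2.2.2 hne_swap rfl).trans hlighter

open scoped Classical in
theorem unique_mst_iff_swaps_general [Fintype V] (w : Sym2 V → M) (hT : IsSpanningTree G T) :
    (∀ T' : SimpleGraph V, IsSpanningTree G T' → T' ≠ T →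
        ∑ e ∈ T.edgeFinset, w e < ∑ e ∈ T'.edgeFinset, w e) ↔
      (∀ e f : Sym2 V, IsSwap G T e f → w e < w f) :=
  ⟨fun hmin _ _ h ↦ h.sum_lt_sum_edgeSwap_iff.1 (hmin _ h.2.2.2 (edgeSwap_ne_self h.1)),
    fun hswap _ hT' hne ↦ sum_lt_sum_of_forall_isSwap hT hswap hT' hne⟩

end Weight

/-- A spanning tree `T` of a connected weighted graph `G` is the unique minimum
spanning tree iff for every swap `(e,f)`, the weight of `f` is strictly greater
than the weight of `e`. -/
theorem unique_mst_iff_swaps {V : Type*} [Fintype V] [DecidableEq V]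
    (G T : SimpleGraph V) (w : Sym2 V → ℝ)
    (hG : G.Connected) (hT : IsSpanningTree G T) :
    (∀ T' : SimpleGraph V, IsSpanningTree G T' → T' ≠ T →
        treeWeight T w < treeWeight T' w) ↔
      (∀ e f : Sym2 V, IsSwap G T e f → w e < w f) :=
  unique_mst_iff_swaps_general w hT
end

section
/- In the auxiliary tree built recursively on a weighted tree T — whose root is the maximum-weight edge e of T, with the two children being auxiliary trees of the two components of T \ {e}, and whose leaves are the vertices of T — the least common ancestor of two leaves u and v is exactly the maximum-weight edge on the path between u and v in T. -/
open SimpleGraph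

/-- A binary auxiliary tree whose leaves are labelled by vertices and whose
internal nodes are labelled by edges. -/
inductive AuxTree (V : Type*) where
  | leaf : V → AuxTree V
  | node : Sym2 V → AuxTree V → AuxTree V → AuxTree V

/-- The leaf `v` occurs in the auxiliary tree. -/
def AuxTree.memLeaf {V : Type*} [DecidableEq V] : AuxTree V → V → Bool
  | .leaf x, v => decide (x = v)
  | .node _ l r, v => l.memLeaf v || r.memLeaf v

/-- The least common ancestor (an internal node, i.e. an edge) of two leaves of
the auxiliary tree. -/
def AuxTree.lca {V : Type*} [DecidableEq V] : AuxTree V → V → V → Option (Sym2 V)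
  | .leaf _, _, _ => none
  | .node e l r, u, v =>
      if l.memLeaf u && l.memLeaf v then l.lca u v
      else if r.memLeaf u && r.memLeaf v then r.lca u v
      else some e

/-- `a` is the auxiliary tree of the weighted tree `T` restricted to the vertex
set `s`: for a single vertex it is a leaf; otherwise its root is the
maximum-weight edge `e` of `T` within `s`, and its two subtrees are the auxiliary
trees of the two components of `T` restricted to `s` with `e` removed. -/
def IsAuxTree {V : Type*} (T : SimpleGraph V) (w : Sym2 V → ℝ) :
    Set V → AuxTree V → Prop
  | s, .leaf v => s = {v}
  | s, .node e l r => ∃ s₁ s₂ : Set V,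
      s₁ ∪ s₂ = s ∧ Disjoint s₁ s₂ ∧
      IsAuxTree T w s₁ l ∧ IsAuxTree T w s₂ r ∧
      (T.induce s₁).Connected ∧ (T.induce s₂).Connected ∧
      e ∈ T.edgeSet ∧ (∃ x ∈ s₁, ∃ y ∈ s₂, e = s(x, y)) ∧
      (∀ e' ∈ T.edgeSet, (∀ v ∈ e', v ∈ s) → w e' ≤ w e)

/-!
Each vertex set in the recursion induces a connected subgraph of the forest `T`, so it contains
every path of `T` between two of its vertices. Follow `u` and `v` down the auxiliary tree for as
long as they lie in the same part. At the node where they separate, the root edge `e` is a bridge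
of `T` whose endpoints lie in the two different parts, so the path crosses `e`; as the path stays
in the current vertex set, on which `e` is heaviest, `e` is a heaviest edge of the path.
-/

section Connectivity

variable {V : Type*} {G : SimpleGraph V} {s t : Set V} {u v x y : V}

theorem exists_isPath_support_subset_of_preconnected_induce (hs : (G.induce s).Preconnected)
    (hu : u ∈ s) (hv : v ∈ s) : ∃ q : G.Walk u v, q.IsPath ∧ ∀ z ∈ q.support, z ∈ s := by
  obtain ⟨q, hq⟩ := (hs ⟨u, hu⟩ ⟨v, hv⟩).exists_isPath
  let ι : G.induce s →g G := ⟨Subtype.val, id⟩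
  refine ⟨q.map ι, hq.map Subtype.val_injective, fun z hz ↦ ?_⟩
  rw [Walk.support_map, List.mem_map] at hz
  obtain ⟨z', -, rfl⟩ := hz
  exact z'.2

theorem mem_of_mem_support_of_isPath_of_preconnected_induce (hG : G.IsAcyclic)
    (hs : (G.induce s).Preconnected) (hu : u ∈ s) (hv : v ∈ s) {p : G.Walk u v} (hp : p.IsPath)
    {z : V} (hz : z ∈ p.support) : z ∈ s := by
  obtain ⟨q, hq, hqs⟩ := exists_isPath_support_subset_of_preconnected_induce hs hu hv
  obtain rfl : p = q := congrArg Subtype.val <|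
    (hG.subsingleton_path u v).elim ⟨p, hp⟩ ⟨q, hq⟩
  exact hqs z hz

theorem bridge_mem_edges_of_disjoint_preconnected_induce (hxy : G.IsBridge s(x, y))
    (hst : Disjoint s t) (hs : (G.induce s).Preconnected) (ht : (G.induce t).Preconnected)
    (hx : x ∈ s) (hy : y ∈ t) (hu : u ∈ s) (hv : v ∈ t) (p : G.Walk u v) :
    s(x, y) ∈ p.edges := by
  obtain ⟨q, -, hq⟩ := exists_isPath_support_subset_of_preconnected_induce hs hx hu
  obtain ⟨r, -, hr⟩ := exists_isPath_support_subset_of_preconnected_induce ht hv hy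
  have hxy_q : s(x, y) ∉ q.edges := fun h ↦
    hst.notMem_of_mem_right hy (hq y (q.snd_mem_support_of_mem_edges h))
  have hxy_r : s(x, y) ∉ r.edges := fun h ↦
    hst.notMem_of_mem_left hx (hr x (r.fst_mem_support_of_mem_edges h))
  have hxy_qpr : s(x, y) ∈ ((q.append p).append r).edges :=
    isBridge_iff_forall_walk_mem_edges.mp hxy _
  simpa only [Walk.edges_append, List.mem_append, hxy_q, hxy_r, false_or, or_false] using hxy_qpr

end Connectivity

namespace AuxTree

variable {V : Type*} [DecidableEq V] {e : Sym2 V} {l r : AuxTree V} {u v : V}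

theorem lca_node_eq_left (hl : l.memLeaf u ∧ l.memLeaf v) :
    (node e l r).lca u v = l.lca u v := by
  simp [lca, hl]

theorem lca_node_eq_right (hl : ¬(l.memLeaf u ∧ l.memLeaf v)) (hr : r.memLeaf u ∧ r.memLeaf v) :
    (node e l r).lca u v = r.lca u v := by
  rw [lca, if_neg (by simpa using hl), if_pos (by simpa using hr)]

theorem lca_node_eq_root (hl : ¬(l.memLeaf u ∧ l.memLeaf v))
    (hr : ¬(r.memLeaf u ∧ r.memLeaf v)) : (node e l r).lca u v = some e := by
  rw [lca, if_neg (by simpa using hl), if_neg (by simpa using hr)]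

end AuxTree

namespace IsAuxTree

variable {V : Type*} {T : SimpleGraph V} {w : Sym2 V → ℝ} {s : Set V} {a l r : AuxTree V}
  {e : Sym2 V} {u v : V}

theorem memLeaf_iff [DecidableEq V] (ha : IsAuxTree T w s a) : a.memLeaf v ↔ v ∈ s := by
  induction a generalizing s with
  | leaf x =>
    obtain rfl : s = {x} := ha
    simp [AuxTree.memLeaf, eq_comm]
  | node e l r ihl ihr =>
    obtain ⟨s₁, s₂, rfl, -, hl, hr, -⟩ := ha
    simp [AuxTree.memLeaf, ihl hl, ihr hr]

theorem connected_induce (ha : IsAuxTree T w s a) : (T.induce s).Connected := by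
  cases a with
  | leaf x =>
    obtain rfl : s = {x} := ha
    exact ⟨.of_subsingleton⟩
  | node e l r =>
    obtain ⟨s₁, s₂, rfl, -, -, -, h₁, h₂, he, ⟨x, hx, y, hy, rfl⟩, -⟩ := ha
    exact connected_induce_union h₁.preconnected h₂.preconnected hx hy he

theorem weight_le_root_of_mem_edges (hT : T.IsAcyclic) (ha : IsAuxTree T w s (.node e l r))
    (hu : u ∈ s) (hv : v ∈ s) {p : T.Walk u v} (hp : p.IsPath) {e' : Sym2 V}
    (he' : e' ∈ p.edges) : w e' ≤ w e := by
  have hconn := ha.connected_induce.preconnected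
  obtain ⟨_, _, -, -, -, -, -, -, -, -, hmax⟩ := ha
  refine hmax e' (p.edges_subset_edgeSet he') fun z hz ↦ ?_
  exact mem_of_mem_support_of_isPath_of_preconnected_induce hT hconn hu hv hp
    (p.mem_support_of_mem_edges he' hz)

theorem root_mem_edges [DecidableEq V] (hT : T.IsAcyclic)
    (ha : IsAuxTree T w s (.node e l r)) (hu : u ∈ s) (hv : v ∈ s)
    (hleft : ¬(l.memLeaf u ∧ l.memLeaf v)) (hright : ¬(r.memLeaf u ∧ r.memLeaf v))
    (p : T.Walk u v) : e ∈ p.edges := by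
  obtain ⟨s₁, s₂, rfl, hdisj, hl, hr, h₁, h₂, he, ⟨x, hx, y, hy, rfl⟩, -⟩ := ha
  rw [hl.memLeaf_iff, hl.memLeaf_iff] at hleft
  rw [hr.memLeaf_iff, hr.memLeaf_iff] at hright
  have hbridge : T.IsBridge s(x, y) := isAcyclic_iff_forall_isBridge.mp hT he
  have crosses {u v : V} (hu : u ∈ s₁) (hv : v ∈ s₂) (p : T.Walk u v) : s(x, y) ∈ p.edges :=
    bridge_mem_edges_of_disjoint_preconnected_induce hbridge hdisj h₁.preconnected
      h₂.preconnected hx hy hu hv p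
  rcases hu with hu | hu <;> rcases hv with hv | hv
  · exact absurd ⟨hu, hv⟩ hleft
  · exact crosses hu hv p
  · simpa only [Walk.edges_reverse, List.mem_reverse] using crosses hv hu p.reverse
  · exact absurd ⟨hu, hv⟩ hright

end IsAuxTree

theorem auxtree_lca_is_heaviest_edge_general {V : Type*} [DecidableEq V] {T : SimpleGraph V}
    (hT : T.IsAcyclic) {w : Sym2 V → ℝ} {s : Set V} {a : AuxTree V} (ha : IsAuxTree T w s a)
    {u v : V} (hu : u ∈ s) (hv : v ∈ s) (huv : u ≠ v) {p : T.Walk u v} (hp : p.IsPath) :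
    ∃ e ∈ p.edges, a.lca u v = some e ∧ ∀ e' ∈ p.edges, w e' ≤ w e := by
  induction a generalizing s with
  | leaf x =>
    obtain rfl : s = {x} := ha
    exact absurd (hu.trans hv.symm) huv
  | node e l r ihl ihr =>
    have ⟨_, _, _, _, hl, hr, _⟩ := ha
    by_cases hleft : l.memLeaf u ∧ l.memLeaf v
    · rw [AuxTree.lca_node_eq_left hleft]
      exact ihl hl (hl.memLeaf_iff.mp hleft.1) (hl.memLeaf_iff.mp hleft.2)
    by_cases hright : r.memLeaf u ∧ r.memLeaf v
    · rw [AuxTree.lca_node_eq_right hleft hright]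
      exact ihr hr (hr.memLeaf_iff.mp hright.1) (hr.memLeaf_iff.mp hright.2)
    exact ⟨e, ha.root_mem_edges hT hu hv hleft hright p, AuxTree.lca_node_eq_root hleft hright,
      fun _ ↦ ha.weight_le_root_of_mem_edges hT hu hv hp⟩

/-- In the auxiliary tree built recursively on a weighted tree `T`, the least
common ancestor of two leaves `u` and `v` is exactly the maximum-weight edge on
the path between `u` and `v` in `T`. -/
theorem auxtree_lca_is_heaviest_edge {V : Type*} [Fintype V] [DecidableEq V]
    (T : SimpleGraph V) (hT : T.IsTree) (w : Sym2 V → ℝ)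
    (hw : Function.Injective fun e : T.edgeSet => w e)
    (a : AuxTree V) (ha : IsAuxTree T w Set.univ a)
    (u v : V) (huv : u ≠ v) (p : T.Walk u v) (hp : p.IsPath) :
    ∃ e ∈ p.edges, a.lca u v = some e ∧ ∀ e' ∈ p.edges, w e' ≤ w e := by
  exact auxtree_lca_is_heaviest_edge_general hT.isAcyclic ha trivial trivial huv hp
end
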